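/- Let (X, μ) be a σ-finite measure space, r ∈ ℕ₊, and V a real vector space with a symmetric positive bilinear form 𝔅; write 𝔅(v) := 𝔅(v,v)^{1/2}. Let f₁,…,f_L : X → V be such that all products 𝔅(f_{l₁}, f_{l₂})⋯𝔅(f_{l_{2r−1}}, f_{l_{2r}}) are measurable and integrable, and suppose ∫_X 𝔅(f_{l₁},f_{l₂})⋯𝔅(f_{l_{2r−1}},f_{l_{2r}}) dμ = 0 whenever l₁,…,l_{2r} are pairwise distinct. Then ‖𝔅(∑_{l=1}^L f_l)‖_{L^{2r}(X)} ≤ C_r ‖(∑_{l=1}^L 𝔅(f_l)²)^{1/2}‖_{L^{2r}(X)}, with a constant C_r depending only on r. -/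

import Mathlib

open Finset MeasureTheory

/-!
Let `w v = √(B v v)`, `N = w (∑ a, f a)` and `G = √(∑ a, w (f a) ^ 2)`. By multilinearity,
`N ^ (2r)` is the sum of `B(f l₁, f l₂) ⋯ B(f l₂ᵣ₋₁, f l₂ᵣ)` over all index tuples `l`.
Inclusion–exclusion over the sets of equations `lᵢ = lⱼ` shows that it differs from the sum over
injective tuples by a signed combination of sums over the tuples which are constant on the classes
of a nontrivial equivalence relation. In such a sum the index of each singleton class sums `f` up
to `∑ a, f a`; by Cauchy–Schwarz this class contributes a factor `N`, and each class of size `k ≥ 2`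
a factor of at most `∑ a, w (f a) ^ k ≤ G ^ k`. Hence the sum is at most `N ^ s * G ^ (2r - s)` with
`s < 2r`, which by Young's inequality is a small multiple of `N ^ (2r)` plus a large multiple of
`G ^ (2r)`. After integration the injective tuples contribute nothing and the small multiple is
absorbed.
-/

theorem sum_pow_le_sqrt_sum_sq_pow {α : Type*} [Fintype α] {a : α → ℝ} (ha : ∀ i, 0 ≤ a i)
    {k : ℕ} (hk : 2 ≤ k) : ∑ i, a i ^ k ≤ √(∑ i, a i ^ 2) ^ k := by
  obtain ⟨j, rfl⟩ := Nat.exists_eq_add_of_le hk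
  have hsq : 0 ≤ ∑ i, a i ^ 2 := sum_nonneg fun i _ => sq_nonneg (a i)
  have hle (i : α) : a i ≤ √(∑ i, a i ^ 2) :=
    Real.le_sqrt_of_sq_le
      (single_le_sum (f := fun i => a i ^ 2) (fun i _ => sq_nonneg (a i)) (mem_univ i))
  calc ∑ i, a i ^ (2 + j) ≤ ∑ i, a i ^ 2 * √(∑ i, a i ^ 2) ^ j := by
        gcongr with i
        rw [pow_add]
        gcongr
        exacts [ha i, hle i]
    _ = √(∑ i, a i ^ 2) ^ (2 + j) := by rw [← sum_mul, pow_add, Real.sq_sqrt hsq]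

theorem pow_mul_pow_le_div_add_mul {x y K : ℝ} (hx : 0 ≤ x) (hy : 0 ≤ y) (hK : 1 ≤ K) (s : ℕ)
    {t : ℕ} (ht : t ≠ 0) : x ^ s * y ^ t ≤ x ^ (s + t) / K + K ^ (s + t) * y ^ (s + t) := by
  rcases le_total x (K * y) with hxy | hyx
  · calc x ^ s * y ^ t ≤ (K * y) ^ s * y ^ t := by gcongr
      _ = K ^ s * y ^ (s + t) := by rw [mul_pow, mul_assoc, pow_add]
      _ ≤ K ^ (s + t) * y ^ (s + t) := by gcongr; omega
      _ ≤ x ^ (s + t) / K + K ^ (s + t) * y ^ (s + t) := le_add_of_nonneg_left (by positivity)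
  · obtain ⟨t, rfl⟩ := Nat.exists_eq_succ_of_ne_zero ht
    have hy_le : y ≤ x := (le_mul_of_one_le_left hy hK).trans hyx
    calc x ^ s * y ^ (t + 1) = x ^ s * (y ^ t * (K * y)) / K := by field_simp; ring
      _ ≤ x ^ s * (x ^ t * x) / K := by gcongr
      _ = x ^ (s + (t + 1)) / K := by ring
      _ ≤ x ^ (s + (t + 1)) / K + K ^ (s + (t + 1)) * y ^ (s + (t + 1)) :=
        le_add_of_nonneg_right (by positivity)

theorem rpow_inv_le_sq_mul_rpow_inv {x y K : ℝ} {n : ℕ} (hn : n ≠ 0) (hx : 0 ≤ x) (hy : 0 ≤ y)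
    (hK : 1 ≤ K) (h : x ≤ K ^ (n + 1) * y) :
    x ^ (n : ℝ)⁻¹ ≤ K ^ 2 * y ^ (n : ℝ)⁻¹ := by
  have hle : x ≤ (K ^ 2) ^ n * y := h.trans <| by
    rw [← pow_mul]
    gcongr
    omega
  calc x ^ (n : ℝ)⁻¹ ≤ ((K ^ 2) ^ n * y) ^ (n : ℝ)⁻¹ := by gcongr
    _ = K ^ 2 * y ^ (n : ℝ)⁻¹ := by
      rw [Real.mul_rpow (by positivity) hy, Real.pow_rpow_inv_natCast (by positivity) hn]

theorem sum_prod_comp_eq_prod_sum_pow {ι κ α R : Type*} [Fintype ι]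
    [Fintype κ] [DecidableEq κ] [Fintype α] [CommSemiring R] (π : ι → κ)
    (a : α → R) :
    ∑ m : κ → α, ∏ i, a (m (π i)) = ∏ c, ∑ x, a x ^ #{i | π i = c} := by
  rw [Fintype.prod_sum]
  refine sum_congr rfl fun m _ => ?_
  simp only [← prod_fiberwise' univ π (fun c => a (m c)), prod_const]

section IndexMaps

variable {ι α : Type*} [Fintype ι] [DecidableEq ι] [Fintype α]

open scoped Classical in
theorem sum_setoid_le_ker_eq_sum_quotient {M : Type*} [AddCommMonoid M] (s : Setoid ι)
    (φ : (ι → α) → M) :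
    ∑ l : ι → α with s ≤ Setoid.ker l, φ l = ∑ m : Quotient s → α, φ (fun i => m ⟦i⟧) := by
  rw [← sum_subtype_eq_sum_filter, subtype_univ]
  exact Fintype.sum_equiv s.liftEquiv _ _ fun l => rfl

open scoped Classical in
theorem sum_setoid_le_ker_prod_le {a : α → ℝ} (ha : ∀ x, 0 ≤ a x) (s : Setoid ι)
    (hs : ∀ i, ∃ j, j ≠ i ∧ s i j) :
    ∑ l : ι → α with s ≤ Setoid.ker l, ∏ i, a (l i) ≤ √(∑ x, a x ^ 2) ^ Fintype.card ι := by
  have two_le_card (c : Quotient s) : 2 ≤ #{i | ⟦i⟧ = c} := by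
    induction c using Quotient.ind with
    | _ i =>
      obtain ⟨j, hji, hij⟩ := hs i
      refine one_lt_card.2 ⟨i, by simp, j, ?_, hji.symm⟩
      simpa using Quotient.sound (s.symm hij)
  calc ∑ l : ι → α with s ≤ Setoid.ker l, ∏ i, a (l i)
      = ∏ c : Quotient s, ∑ x, a x ^ #{i | ⟦i⟧ = c} := by
        rw [sum_setoid_le_ker_eq_sum_quotient s fun l => ∏ i, a (l i)]
        exact sum_prod_comp_eq_prod_sum_pow (Quotient.mk s) a
    _ ≤ ∏ c : Quotient s, √(∑ x, a x ^ 2) ^ #{i | ⟦i⟧ = c} :=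
        prod_le_prod (fun c _ => sum_nonneg fun x _ => pow_nonneg (ha x) _)
          fun c _ => sum_pow_le_sqrt_sum_sq_pow ha (two_le_card c)
    _ = √(∑ x, a x ^ 2) ^ Fintype.card ι := by
        rw [prod_pow_eq_pow_sum, ← card_eq_sum_card_fiberwise fun i _ => mem_univ _, card_univ]

open scoped Classical in
theorem sum_injective_eq_sum_powerset {A : Type*} [AddCommGroup A] (φ : (ι → α) → A) :
    ∑ l : ι → α with Function.Injective l, φ l
      = ∑ E ∈ (univ : Finset ι).offDiag.powerset,
          (-1 : ℤ) ^ #E • ∑ l : ι → α with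
            Relation.EqvGen.setoid (fun i j => (i, j) ∈ E) ≤ Setoid.ker l, φ l := by
  have key := inclusion_exclusion_sum_inf_compl (univ : Finset ι).offDiag
    (fun p => ({l | l p.1 = l p.2} : Finset (ι → α))) φ
  convert key using 3 with E
  · ext l
    rw [mem_filter_univ]
    simp [mem_inf, Function.Injective, not_imp_not]
  · congr 1
    ext l
    simp [mem_inf, Setoid.gi.gc _ _, Pi.le_def, Setoid.ker_def]

end IndexMaps

theorem sum_filter_restrict_map_eq {ι α R V W : Type*} [Fintype ι] [DecidableEq ι] [Fintype α]
    [CommSemiring R] [AddCommMonoid V] [Module R V] [AddCommMonoid W] [Module R W]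
    (Φ : MultilinearMap R (fun _ : ι => V) W) (f : α → V) (T : ι → Prop) [DecidablePred T]
    (P : ({i // ¬T i} → α) → Prop) [DecidablePred P] :
    ∑ l : ι → α with P (fun i => l i), Φ (fun i => f (l i))
      = ∑ m : {i // ¬T i} → α with P m,
          Φ fun i => if h : T i then ∑ a, f a else f (m ⟨i, h⟩) := by
  have sum_over_T (m : {i // ¬T i} → α) :
      Φ (fun i => if h : T i then ∑ a, f a else f (m ⟨i, h⟩))
        = ∑ k : {i // T i} → α,
            Φ fun i => f ((Equiv.piEquivPiSubtypeProd T fun _ => α).symm (k, m) i) := by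
    refine ((Φ.domDomRestrict T fun i => f (m i)).map_sum fun _ => f).trans ?_
    refine sum_congr rfl fun k _ => congrArg Φ (funext fun i => ?_)
    by_cases h : T i <;> simp [h]
  simp only [sum_over_T, sum_filter]
  rw [← (Equiv.piEquivPiSubtypeProd T fun _ => α).symm.sum_comp, Fintype.sum_prod_type_right]
  refine sum_congr rfl fun m _ => ?_
  have restrict_symm (k : {i // T i} → α) :
      (fun i : {i // ¬T i} => (Equiv.piEquivPiSubtypeProd T fun _ => α).symm (k, m) i) = m :=
    funext fun i => by simp [i.2]
  simp only [restrict_symm, sum_ite_irrel, sum_const_zero]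

/-- The class of `i` under the equivalence relation `s` is the singleton `{i}`. Such an index is
free to vary over all of `α` in a sum over the maps `l : ι → α` which are constant on the classes
of `s`. -/
def IsIsolated {ι : Type*} (s : Setoid ι) (i : ι) : Prop :=
  ∀ j, s i j → j = i

theorem not_isIsolated_iff {ι : Type*} {s : Setoid ι} {i : ι} :
    ¬IsIsolated s i ↔ ∃ j, j ≠ i ∧ s i j := by
  simp [IsIsolated, and_comm]

theorem exists_not_isIsolated {ι : Type*} {s : Setoid ι} (hs : s ≠ ⊥) : ∃ i, ¬IsIsolated s i := by
  contrapose! hs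
  exact le_bot_iff.1 fun i j hij => (hs i j hij).symm

theorem le_ker_iff_comap_not_isIsolated {ι α : Type*} {s : Setoid ι} {l : ι → α} :
    s ≤ Setoid.ker l ↔
      s.comap ((↑) : {i // ¬IsIsolated s i} → ι)
        ≤ Setoid.ker fun i : {i // ¬IsIsolated s i} => l i := by
  refine ⟨fun h i j hij => h hij, fun h i j hij => ?_⟩
  by_cases hji : j = i
  · rw [hji]
  · exact @h ⟨i, not_isIsolated_iff.2 ⟨j, hji, hij⟩⟩
      ⟨j, not_isIsolated_iff.2 ⟨i, Ne.symm hji, s.symm hij⟩⟩ hij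

theorem eqvGen_setoid_ne_bot {ι : Type*} {E : Finset (ι × ι)} (hE : ∀ p ∈ E, p.1 ≠ p.2)
    (hne : E.Nonempty) : Relation.EqvGen.setoid (fun i j => (i, j) ∈ E) ≠ ⊥ := by
  obtain ⟨⟨i, j⟩, hij⟩ := hne
  exact fun h => hE _ hij (h.le (Relation.EqvGen.rel i j hij))

section Pointwise

variable {ι α V : Type*} [Fintype ι] [DecidableEq ι] [Fintype α] [AddCommGroup V] [Module ℝ V]
  {Φ : MultilinearMap ℝ (fun _ : ι => V) ℝ} {w : V → ℝ}

open scoped Classical in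
theorem abs_sum_setoid_le_ker_map_le (hw : ∀ v, 0 ≤ w v) (hΦ : ∀ v, |Φ v| ≤ ∏ i, w (v i))
    (f : α → V) (s : Setoid ι) :
    |∑ l : ι → α with s ≤ Setoid.ker l, Φ (fun i => f (l i))|
      ≤ w (∑ a, f a) ^ Fintype.card {i // IsIsolated s i}
        * √(∑ a, w (f a) ^ 2) ^ Fintype.card {i // ¬IsIsolated s i} := by
  set T := IsIsolated s
  set s' : Setoid {i // ¬T i} := s.comap (↑)
  have term_le (m : {i // ¬T i} → α) :
      |Φ fun i => if h : T i then ∑ a, f a else f (m ⟨i, h⟩)|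
        ≤ w (∑ a, f a) ^ Fintype.card {i // T i} * ∏ i, w (f (m i)) := by
    refine (hΦ _).trans_eq ?_
    rw [← Fintype.prod_subtype_mul_prod_subtype T]
    congr 1
    · simp +contextual [Subtype.prop]
    · exact prod_congr rfl fun i _ => by rw [dif_neg i.2]
  have no_isolated (i : {i // ¬T i}) : ∃ j, j ≠ i ∧ s' i j := by
    obtain ⟨j, hji, hij⟩ := not_isIsolated_iff.1 i.2
    exact ⟨⟨j, not_isIsolated_iff.2 ⟨i, hji.symm, s.symm hij⟩⟩, Subtype.coe_ne_coe.1 hji, hij⟩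
  calc |∑ l : ι → α with s ≤ Setoid.ker l, Φ (fun i => f (l i))|
      = |∑ m : {i // ¬T i} → α with s' ≤ Setoid.ker m,
          Φ fun i => if h : T i then ∑ a, f a else f (m ⟨i, h⟩)| := by
        simp only [le_ker_iff_comap_not_isIsolated (s := s)]
        rw [← sum_filter_restrict_map_eq Φ f T fun m => s' ≤ Setoid.ker m]
    _ ≤ ∑ m : {i // ¬T i} → α with s' ≤ Setoid.ker m,
          w (∑ a, f a) ^ Fintype.card {i // T i} * ∏ i, w (f (m i)) :=
        (abs_sum_le_sum_abs _ _).trans (sum_le_sum fun m _ => term_le m)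
    _ ≤ w (∑ a, f a) ^ Fintype.card {i // T i}
          * √(∑ a, w (f a) ^ 2) ^ Fintype.card {i // ¬T i} := by
        rw [← mul_sum]
        exact mul_le_mul_of_nonneg_left
          (sum_setoid_le_ker_prod_le (fun a => hw (f a)) s' no_isolated) (pow_nonneg (hw _) _)

open scoped Classical in
theorem abs_sum_setoid_le_ker_map_le_of_ne_bot (hw : ∀ v, 0 ≤ w v)
    (hΦ : ∀ v, |Φ v| ≤ ∏ i, w (v i)) (f : α → V) {s : Setoid ι} (hs : s ≠ ⊥) {K : ℝ}
    (hK : 1 ≤ K) :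
    |∑ l : ι → α with s ≤ Setoid.ker l, Φ (fun i => f (l i))|
      ≤ w (∑ a, f a) ^ Fintype.card ι / K
        + K ^ Fintype.card ι * √(∑ a, w (f a) ^ 2) ^ Fintype.card ι := by
  have card_ne_zero : Fintype.card {i // ¬IsIsolated s i} ≠ 0 := by
    obtain ⟨i, hi⟩ := exists_not_isIsolated hs
    exact Fintype.card_pos_iff.2 ⟨i, hi⟩ |>.ne'
  have card_add : Fintype.card {i // IsIsolated s i} + Fintype.card {i // ¬IsIsolated s i}
      = Fintype.card ι := by
    rw [← Fintype.card_sum]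
    exact Fintype.card_congr (Equiv.sumCompl (IsIsolated s))
  rw [← card_add]
  exact (abs_sum_setoid_le_ker_map_le hw hΦ f s).trans
    (pow_mul_pow_le_div_add_mul (hw _) (Real.sqrt_nonneg _) hK _ card_ne_zero)

open scoped Classical in
theorem abs_map_sum_sub_sum_injective_le (hw : ∀ v, 0 ≤ w v) (hΦ : ∀ v, |Φ v| ≤ ∏ i, w (v i))
    (f : α → V) {K : ℝ} (hK : 1 ≤ K) :
    |Φ (fun _ => ∑ a, f a) - ∑ l : ι → α with Function.Injective l, Φ (fun i => f (l i))|
      ≤ 2 ^ (Fintype.card ι * (Fintype.card ι - 1)) * (w (∑ a, f a) ^ Fintype.card ι / K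
        + K ^ Fintype.card ι * √(∑ a, w (f a) ^ 2) ^ Fintype.card ι) := by
  set n := Fintype.card ι
  set Y := w (∑ a, f a) ^ n / K + K ^ n * √(∑ a, w (f a) ^ 2) ^ n
  have hY : 0 ≤ Y := by have := hw (∑ a, f a); positivity
  set S : Finset (ι × ι) → ℝ := fun E => ∑ l : ι → α with
    Relation.EqvGen.setoid (fun i j => (i, j) ∈ E) ≤ Setoid.ker l, Φ (fun i => f (l i))
  set 𝓔 := (univ : Finset ι).offDiag.powerset
  have S_empty : S ∅ = Φ fun _ => ∑ a, f a := by
    rw [Φ.map_sum]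
    simp [S, Setoid.gi.gc _ _, Pi.le_def]
  have S_le : ∀ E ∈ 𝓔.erase ∅, |(-1 : ℤ) ^ #E • S E| ≤ Y := fun E hE => by
    obtain ⟨hne, hE⟩ := mem_erase.1 hE
    have hbot := eqvGen_setoid_ne_bot (fun p hp => (mem_offDiag.1 (mem_powerset.1 hE hp)).2.2)
      (nonempty_iff_ne_empty.2 hne)
    rw [zsmul_eq_mul, abs_mul]
    simpa using abs_sum_setoid_le_ker_map_le_of_ne_bot hw hΦ f hbot hK
  have card_le : (#(𝓔.erase ∅) : ℝ) ≤ 2 ^ (n * (n - 1)) := by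
    have : #𝓔 = 2 ^ (n * (n - 1)) := by simp [𝓔, n, offDiag_card, Nat.mul_sub]
    exact_mod_cast (card_erase_le.trans_eq this)
  calc |Φ (fun _ => ∑ a, f a) - ∑ l : ι → α with Function.Injective l, Φ (fun i => f (l i))|
      = |∑ E ∈ 𝓔.erase ∅, (-1 : ℤ) ^ #E • S E| := by
        rw [sum_injective_eq_sum_powerset, ← add_sum_erase 𝓔 _ (empty_mem_powerset _)]
        simp [S, ← S_empty]
    _ ≤ #(𝓔.erase ∅) • Y := (abs_sum_le_sum_abs _ _).trans (sum_le_card_nsmul _ _ _ S_le)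
    _ ≤ 2 ^ (n * (n - 1)) * Y := by rw [nsmul_eq_mul]; gcongr

end Pointwise

/-- Type IV superorthogonality of the family `f` with respect to a multilinear form `Φ`: only the
integrals of `Φ` over tuples of pairwise distinct members of the family are required to vanish. -/
def IsSuperorthogonal {ι α V X : Type*} [AddCommMonoid V] [Module ℝ V] [MeasurableSpace X]
    (Φ : MultilinearMap ℝ (fun _ : ι => V) ℝ) (f : α → X → V) (μ : Measure X) : Prop :=
  ∀ l : ι → α, Function.Injective l → ∫ x, Φ (fun i => f (l i) x) ∂μ = 0

theorem integral_pow_le_of_isSuperorthogonal {ι α V X : Type*} [Fintype ι] [Fintype α]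
    [AddCommGroup V] [Module ℝ V] [MeasurableSpace X] {μ : Measure X}
    {Φ : MultilinearMap ℝ (fun _ : ι => V) ℝ} {w : V → ℝ} {n : ℕ} (hn : Fintype.card ι = n)
    (hw : ∀ v, 0 ≤ w v) (hΦ : ∀ v, |Φ v| ≤ ∏ i, w (v i))
    (hdiag : ∀ v, Φ (fun _ => v) = w v ^ n)
    {f : α → X → V} (hint : ∀ l : ι → α, Integrable (fun x => Φ fun i => f (l i) x) μ)
    (hsq : Integrable (fun x => √(∑ a, w (f a x) ^ 2) ^ n) μ)
    (hf : IsSuperorthogonal Φ f μ) :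
    ∫ x, w (∑ a, f a x) ^ n ∂μ
      ≤ (2 ^ (n * (n - 1) + 1)) ^ (n + 1) * ∫ x, √(∑ a, w (f a x) ^ 2) ^ n ∂μ := by
  classical
  set K : ℝ := 2 ^ (n * (n - 1) + 1) with hK
  have hK_one : 1 ≤ K := one_le_pow₀ one_le_two
  have hint_sum : Integrable (fun x => w (∑ a, f a x) ^ n) μ := by
    simp_rw [← hdiag, Φ.map_sum]
    exact integrable_finsetSum _ fun l _ => hint l
  have hint_inj : Integrable (fun x => ∑ l : ι → α with Function.Injective l,
      Φ fun i => f (l i) x) μ := integrable_finsetSum _ fun l _ => hint l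
  have integral_inj :
      ∫ x, ∑ l : ι → α with Function.Injective l, Φ (fun i => f (l i) x) ∂μ = 0 := by
    rw [integral_finsetSum _ fun l _ => hint l]
    exact sum_eq_zero fun l hl => hf l (mem_filter.1 hl).2
  have pointwise (x : X) :
      w (∑ a, f a x) ^ n - ∑ l : ι → α with Function.Injective l, Φ (fun i => f (l i) x)
        ≤ w (∑ a, f a x) ^ n / 2 + K ^ (n + 1) / 2 * √(∑ a, w (f a x) ^ 2) ^ n := by
    have hK_half : (2 : ℝ) ^ (n * (n - 1)) = K / 2 := by rw [hK, pow_succ]; ring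
    have bound := abs_map_sum_sub_sum_injective_le hw hΦ (fun a => f a x) hK_one
    rw [hdiag, hn, hK_half] at bound
    refine (le_abs_self _).trans (bound.trans_eq ?_)
    field_simp
    ring
  have integrated := integral_mono (hint_sum.sub hint_inj)
    ((hint_sum.div_const 2).add (hsq.const_mul (K ^ (n + 1) / 2))) pointwise
  rw [integral_sub' hint_sum hint_inj, integral_inj,
    integral_add' (hint_sum.div_const 2) (hsq.const_mul _), integral_div,
    integral_const_mul] at integrated
  linarith

section PairedProduct

/-- The bijection sending `(i, 0)` to `2 * i` and `(i, 1)` to `2 * i + 1`, which groups `2 * r`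
indices into consecutive pairs. -/
def pairEquiv (r : ℕ) : (Σ _ : Fin r, Fin 2) ≃ Fin (2 * r) :=
  (Equiv.sigmaEquivProd (Fin r) (Fin 2)).trans (finProdFinEquiv.trans (finCongr (mul_comm r 2)))

theorem pairEquiv_zero {r : ℕ} (i : Fin r) : pairEquiv r ⟨i, 0⟩ = ⟨2 * i.1, by omega⟩ :=
  Fin.ext (by simp [pairEquiv])

theorem pairEquiv_one {r : ℕ} (i : Fin r) : pairEquiv r ⟨i, 1⟩ = ⟨2 * i.1 + 1, by omega⟩ :=
  Fin.ext (by simp [pairEquiv, add_comm])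

theorem prod_univ_two_mul {M : Type*} [CommMonoid M] {r : ℕ} (g : Fin (2 * r) → M) :
    ∏ k, g k = ∏ i : Fin r, g ⟨2 * i.1, by omega⟩ * g ⟨2 * i.1 + 1, by omega⟩ := by
  simp_rw [← (pairEquiv r).prod_comp, Fintype.prod_sigma, Fin.prod_univ_two, pairEquiv_zero,
    pairEquiv_one]

/-- The `2r`-linear form `(v₁, …, v₂ᵣ) ↦ B(v₁, v₂) ⋯ B(v₂ᵣ₋₁, v₂ᵣ)`. -/
def pairedProduct {R V : Type*} [CommSemiring R] [AddCommMonoid V] [Module R V]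
    (B : V →ₗ[R] V →ₗ[R] R) (r : ℕ) : MultilinearMap R (fun _ : Fin (2 * r) => V) R :=
  ((MultilinearMap.mkPiAlgebra R (Fin r) R).compMultilinearMap fun _ =>
    LinearMap.uncurryLeft (M := fun _ : Fin 2 => V)
      ((MultilinearMap.ofSubsingletonₗ R R V R (0 : Fin 1)).toLinearMap ∘ₗ B)).domDomCongr
    (pairEquiv r)

theorem pairedProduct_apply {R V : Type*} [CommSemiring R] [AddCommMonoid V] [Module R V]
    (B : V →ₗ[R] V →ₗ[R] R) {r : ℕ} (v : Fin (2 * r) → V) :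
    pairedProduct B r v = ∏ i : Fin r, B (v ⟨2 * i.1, by omega⟩) (v ⟨2 * i.1 + 1, by omega⟩) := by
  simp [pairedProduct, Sigma.curry, Fin.tail, pairEquiv_zero, pairEquiv_one]

variable {V : Type*} [AddCommGroup V] [Module ℝ V] {B : V →ₗ[ℝ] V →ₗ[ℝ] ℝ}

theorem abs_apply_le_sqrt_mul_sqrt (hs : ∀ u v, B u v = B v u) (hp : ∀ v, 0 ≤ B v v) (u v : V) :
    |B u v| ≤ √(B u u) * √(B v v) := by
  rw [← Real.sqrt_mul (hp u)]
  exact Real.abs_le_sqrt (LinearMap.BilinForm.apply_sq_le_of_symm B hp ⟨hs⟩ u v)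

theorem abs_pairedProduct_le (hs : ∀ u v, B u v = B v u) (hp : ∀ v, 0 ≤ B v v) {r : ℕ}
    (v : Fin (2 * r) → V) : |pairedProduct B r v| ≤ ∏ k, √(B (v k) (v k)) := by
  rw [pairedProduct_apply, abs_prod, prod_univ_two_mul]
  gcongr
  exact abs_apply_le_sqrt_mul_sqrt hs hp _ _

theorem pairedProduct_const (hp : ∀ v, 0 ≤ B v v) (r : ℕ) (v : V) :
    pairedProduct B r (fun _ => v) = √(B v v) ^ (2 * r) := by
  simp [pairedProduct_apply, pow_mul, Real.sq_sqrt (hp v)]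

theorem sum_apply_self_pow_eq_sum_pairedProduct {α : Type*} [Fintype α] (r : ℕ) (f : α → V) :
    (∑ a, B (f a) (f a)) ^ r
      = ∑ m : Fin r → α, pairedProduct B r fun k => f (m ((pairEquiv r).symm k).1) := by
  simp only [pairedProduct_apply, ← pairEquiv_zero, ← pairEquiv_one, Equiv.symm_apply_apply,
    Fintype.sum_pow]

end PairedProduct

theorem stmt13_general {r : ℕ} (hr : 0 < r) {X V α : Type*} [MeasurableSpace X] {μ : Measure X}
    [AddCommGroup V] [Module ℝ V] {B : V →ₗ[ℝ] V →ₗ[ℝ] ℝ} (hs : ∀ u v : V, B u v = B v u)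
    (hp : ∀ v : V, 0 ≤ B v v) [Fintype α] (f : α → X → V)
    (hint : ∀ l : Fin (2 * r) → α, Integrable (fun x =>
      ∏ i : Fin r, B (f (l ⟨2 * i.1, by omega⟩) x) (f (l ⟨2 * i.1 + 1, by omega⟩) x)) μ)
    (hf : ∀ l : Fin (2 * r) → α, Function.Injective l → ∫ x,
      ∏ i : Fin r, B (f (l ⟨2 * i.1, by omega⟩) x) (f (l ⟨2 * i.1 + 1, by omega⟩) x) ∂μ = 0) :
    (∫ x, √(B (∑ a, f a x) (∑ a, f a x)) ^ (2 * r) ∂μ) ^ (1 / (2 * r : ℝ))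
      ≤ 4 ^ (2 * r * (2 * r - 1) + 1)
        * (∫ x, (∑ a, √(B (f a x) (f a x)) ^ 2) ^ r ∂μ) ^ (1 / (2 * r : ℝ)) := by
  have sqrt_pow (x : X) : √(∑ a, √(B (f a x) (f a x)) ^ 2) ^ (2 * r)
      = (∑ a, √(B (f a x) (f a x)) ^ 2) ^ r := by
    rw [pow_mul, Real.sq_sqrt (sum_nonneg fun a _ => sq_nonneg _)]
  have hint_paired : ∀ l : Fin (2 * r) → α,
      Integrable (fun x => pairedProduct B r fun k => f (l k) x) μ := by
    simpa only [pairedProduct_apply] using hint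
  have hf_paired : IsSuperorthogonal (pairedProduct B r) f μ := by
    simpa only [IsSuperorthogonal, pairedProduct_apply] using hf
  have hG : Integrable (fun x => √(∑ a, √(B (f a x) (f a x)) ^ 2) ^ (2 * r)) μ := by
    simp_rw [sqrt_pow, Real.sq_sqrt (hp _), sum_apply_self_pow_eq_sum_pairedProduct]
    exact integrable_finsetSum _ fun m _ => hint_paired _
  have moment_le := integral_pow_le_of_isSuperorthogonal (Fintype.card_fin _)
    (fun v => Real.sqrt_nonneg (B v v)) (abs_pairedProduct_le hs hp) (pairedProduct_const hp r)
    hint_paired hG hf_paired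
  have norm_le := rpow_inv_le_sq_mul_rpow_inv (by positivity)
    (integral_nonneg fun x => by positivity) (integral_nonneg fun x => by positivity)
    (one_le_pow₀ one_le_two) moment_le
  have const_eq : ((2 : ℝ) ^ (2 * r * (2 * r - 1) + 1)) ^ 2 = 4 ^ (2 * r * (2 * r - 1) + 1) := by
    rw [pow_right_comm]
    norm_num
  simpa only [sqrt_pow, const_eq, ← one_div, Nat.cast_mul, Nat.cast_ofNat] using norm_le

/-- Vector-valued direct inequality for type IV superorthogonality: for each
`r ≥ 1` there is a constant `C_r > 0` such that for any σ-finite measure space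
`(X,μ)`, any real vector space `V` with a symmetric positive bilinear form `𝔅`
(write `𝔅(v) := 𝔅(v,v)^{1/2}`), and any `f₁,…,f_L : X → V` making all products
`𝔅(f_{l₁},f_{l₂})⋯𝔅(f_{l_{2r−1}},f_{l_{2r}})` measurable and integrable and
satisfying `∫ 𝔅(f_{l₁},f_{l₂})⋯𝔅(f_{l_{2r−1}},f_{l_{2r}}) dμ = 0` whenever
`l₁,…,l_{2r}` are pairwise distinct, one has
`‖𝔅(∑ f_l)‖_{L^{2r}} ≤ C_r ‖(∑ 𝔅(f_l)²)^{1/2}‖_{L^{2r}}`. -/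
theorem stmt13 (r : ℕ) (hr : 0 < r) :
    ∃ C : ℝ, 0 < C ∧
      ∀ (X : Type u) [MeasurableSpace X] (μ : Measure X) [SigmaFinite μ]
        (V : Type v) [AddCommGroup V] [Module ℝ V]
        (B : V →ₗ[ℝ] V →ₗ[ℝ] ℝ),
        (∀ u v : V, B u v = B v u) → (∀ v : V, 0 ≤ B v v) →
        ∀ (L : ℕ) (f : Fin L → X → V),
        (∀ l : Fin (2 * r) → Fin L,
          Measurable (fun x =>
            ∏ i : Fin r, B (f (l ⟨2 * i.1, by have := i.isLt; omega⟩) x)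
              (f (l ⟨2 * i.1 + 1, by have := i.isLt; omega⟩) x))) →
        (∀ l : Fin (2 * r) → Fin L,
          Integrable (fun x =>
            ∏ i : Fin r, B (f (l ⟨2 * i.1, by have := i.isLt; omega⟩) x)
              (f (l ⟨2 * i.1 + 1, by have := i.isLt; omega⟩) x)) μ) →
        (∀ l : Fin (2 * r) → Fin L, Function.Injective l →
          ∫ x, (∏ i : Fin r, B (f (l ⟨2 * i.1, by have := i.isLt; omega⟩) x)
              (f (l ⟨2 * i.1 + 1, by have := i.isLt; omega⟩) x)) ∂μ = 0) →
        (∫ x, Real.sqrt (B (∑ l : Fin L, f l x) (∑ l : Fin L, f l x)) ^ (2 * r) ∂μ)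
            ^ (1 / (2 * r : ℝ))
          ≤ C * (∫ x, (∑ l : Fin L, Real.sqrt (B (f l x) (f l x)) ^ 2) ^ r ∂μ)
            ^ (1 / (2 * r : ℝ)) :=
  ⟨4 ^ (2 * r * (2 * r - 1) + 1), by positivity, fun _ _ _ _ _ _ _ _ hs hp _ f _ hint hf =>
    stmt13_general hr hs hp f hint hf⟩
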